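/- Let (s,q) be an admissible slope–constraint pair and let (ρ_l, ρ_r) ∈ G_s(q). Then for every κ ∈ [0,1]: Φ_s(ρ_l, κ) − Φ_s(ρ_r, κ) + ℛ_s(κ, q) ≥ 0, where ℛ_s(κ,q) := 2(F_s(κ) − min{F_s(κ), q}). -/

import Mathlib

/-!
The Kruzhkov fluxes only see the position of `κ` relative to `ρl` and `ρr`. In each part of the
germ both states carry the same flux value `c`, so the two Kruzhkov fluxes cancel unless `κ` lies
strictly between the states, and the remainder is always nonnegative.
* If `ρr < κ < ρl`, then `c = q` and the flux difference is `2 (q - F_s(κ))`; adding the remainder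
  gives `2 (q - min (F_s(κ)) q) ≥ 0`.
* If `ρl < κ < ρr`, the flux difference is `2 (F_s(κ) - c)`, which is nonnegative because the
  concave function `F_s` lies above its chord between the two states.
-/

open MeasureTheory Set Filter Topology

noncomputable section

/-- The normal flux `F_s(ρ) = f(ρ) - s·ρ` through the line of slope `s`. -/
def Flx (f : ℝ → ℝ) (s ρ : ℝ) : ℝ := f ρ - s * ρ

/-- The Kruzhkov entropy flux `Φ_s(a,b) = sgn(a-b)(F_s(a) - F_s(b))`. -/
def EFlx (f : ℝ → ℝ) (s a b : ℝ) : ℝ := Real.sign (a - b) * (Flx f s a - Flx f s b)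

/-- `f` is a bell-shaped flux with critical density `ρb`:
`f` is `C²` on `[0,1]`, vanishes at `0` and `1`, is concave on `[0,1]`, and its
derivative has the sign of `ρb - ρ` a.e. on `(0,1)`. -/
structure BellShaped (f : ℝ → ℝ) (ρb : ℝ) : Prop where
  smooth : ContDiffOn ℝ 2 f (Icc 0 1)
  zero_at_zero : f 0 = 0
  zero_at_one : f 1 = 0
  concave : ConcaveOn ℝ (Icc 0 1) f
  crit_mem : ρb ∈ Ioo (0:ℝ) 1
  deriv_sign : ∀ᵐ ρ ∂(volume.restrict (Ioo (0:ℝ) 1)),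
    0 < derivWithin f (Icc 0 1) ρ * (ρb - ρ)

/-- `max_{[0,1]} F_s`. -/
def maxFlx (f : ℝ → ℝ) (s : ℝ) : ℝ := sSup (Flx f s '' Icc 0 1)

/-- Admissible slope–constraint pair `(s,q)`. -/
def AdmissiblePair (f : ℝ → ℝ) (s q : ℝ) : Prop :=
  (0 ≤ s ∧ 0 ≤ q ∧ q < maxFlx f s) ∨ (s < 0 ∧ -s ≤ q ∧ q < maxFlx f s)

/-- The admissibility germ `G_s(q) = G¹ ∪ G² ∪ G³`. -/
def Germ (f : ℝ → ℝ) (s q : ℝ) : Set (ℝ × ℝ) :=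
  {p | p.1 ∈ Icc (0:ℝ) 1 ∧ p.2 ∈ Icc (0:ℝ) 1 ∧
    ((p.2 < p.1 ∧ Flx f s p.1 = q ∧ Flx f s p.2 = q) ∨
     (p.1 = p.2 ∧ Flx f s p.1 ≤ q) ∨
     (p.1 < p.2 ∧ Flx f s p.1 = Flx f s p.2 ∧ Flx f s p.1 ≤ q))}

/-- The constraint remainder `ℛ_s(κ,q) = 2(F_s(κ) - min{F_s(κ), q})`. -/
def Rem (f : ℝ → ℝ) (s κ q : ℝ) : ℝ := 2 * (Flx f s κ - min (Flx f s κ) q)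

lemma Flx_concaveOn {f : ℝ → ℝ} (hf : ConcaveOn ℝ (Icc 0 1) f) (s : ℝ) :
    ConcaveOn ℝ (Icc 0 1) (Flx f s) := by
  refine ⟨hf.1, fun x hx y hy a b ha hb hab => ?_⟩
  have h := hf.2 hx hy ha hb hab
  simp only [Flx, smul_eq_mul] at h ⊢
  linarith

lemma Rem_nonneg (f : ℝ → ℝ) (s κ q : ℝ) : 0 ≤ Rem f s κ q := by
  have := min_le_left (Flx f s κ) q
  unfold Rem
  linarith

lemma EFlx_of_lt {f : ℝ → ℝ} {s a b : ℝ} (h : a < b) :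
    EFlx f s a b = Flx f s b - Flx f s a := by
  rw [EFlx, Real.sign_of_neg (sub_neg.2 h)]
  ring

/-- The inequality is not strict: both sides vanish at `a = b`. -/
lemma EFlx_of_ge {f : ℝ → ℝ} {s a b : ℝ} (h : b ≤ a) :
    EFlx f s a b = Flx f s a - Flx f s b := by
  rcases h.eq_or_lt with rfl | h
  · simp [EFlx]
  · rw [EFlx, Real.sign_of_pos (sub_pos.2 h), one_mul]

/-- for `(ρl,ρr) ∈ G_s(q)` and every `κ ∈ [0,1]`,
`Φ_s(ρl,κ) - Φ_s(ρr,κ) + ℛ_s(κ,q) ≥ 0`. -/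
theorem germ_entropy_remainder_nonneg
    (f : ℝ → ℝ) (ρb : ℝ) (hf : BellShaped f ρb)
    (s q : ℝ) (hsq : AdmissiblePair f s q)
    (ρl ρr : ℝ) (h : (ρl, ρr) ∈ Germ f s q) :
    ∀ κ ∈ Icc (0:ℝ) 1,
      0 ≤ EFlx f s ρl κ - EFlx f s ρr κ + Rem f s κ q := by
  intro κ hκ
  have hR := Rem_nonneg f s κ q
  obtain ⟨hl, hr, ⟨hlt, h1, h2⟩ | ⟨heq, _⟩ | ⟨hlt, h1, _⟩⟩ := h
  · dsimp only at hlt h1 h2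
    rcases lt_or_ge ρl κ with hlκ | hlκ
    · rw [EFlx_of_lt hlκ, EFlx_of_lt (hlt.trans hlκ)]
      linarith
    · rw [EFlx_of_ge hlκ]
      rcases lt_or_ge ρr κ with hrκ | hrκ
      · rw [EFlx_of_lt hrκ, Rem]
        linarith [min_le_right (Flx f s κ) q]
      · rw [EFlx_of_ge hrκ]
        linarith
  · dsimp only at heq
    subst heq
    linarith
  · dsimp only at hlt h1
    rcases lt_or_ge ρl κ with hlκ | hlκ
    · rw [EFlx_of_lt hlκ]
      rcases lt_or_ge ρr κ with hrκ | hrκ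
      · rw [EFlx_of_lt hrκ]
        linarith
      · have hc : min (Flx f s ρl) (Flx f s ρr) ≤ Flx f s κ :=
          (Flx_concaveOn hf.concave s).min_le_of_mem_Icc hl hr ⟨hlκ.le, hrκ⟩
        rw [← h1, min_self] at hc
        rw [EFlx_of_ge hrκ]
        linarith
    · rw [EFlx_of_ge hlκ, EFlx_of_ge (hlκ.trans hlt.le)]
      linarith
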